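/- For every ε > 0 there exists r₀ such that for every integer r ≥ r₀ there exists n₀ such that for all n ≥ n₀, (1−ε)·r·n·ln(n) ≤ opt_weak,p,r(S_n) ≤ (1+ε)·r·n·ln(n). In other words, lim_{r→∞} lim_{n→∞} opt_weak,p,r(S_n)/(r·n·ln n) = 1. -/

import Mathlib

/-- `GuessForce ok V m` means: in the mistake-bound game with weak (yes/no) reinforcement
where queries have type `Q`, guesses have type `A`, and `ok q g f` says that guess `g` is a
correct answer to query `q` when the hidden target is `f`, an (adaptive) adversary whose
answers must stay consistent with some member of the current version space `V` can force
every deterministic learner to be answered "no" at least `m` times.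
At each step the adversary chooses a query `q` and, depending on the learner's guess `g`,
either answers "no" (`c g = true`, one more mistake, continuing from the consistent
functions for which the guess is wrong) or answers "yes" (`c g = false`, continuing from the
consistent functions for which the guess is correct). -/
inductive GuessForce {α Q A : Type*} (ok : Q → A → α → Prop) : Set α → ℕ → Prop where
  | zero (V : Set α) : V.Nonempty → GuessForce ok V 0
  | step (V : Set α) (m : ℕ) (q : Q) (c : A → Bool)
      (hne : ∀ g : A, (if c g then {f ∈ V | ¬ ok q g f} else {f ∈ V | ok q g f}).Nonempty)
      (h : ∀ g : A, GuessForce ok (if c g then {f ∈ V | ¬ ok q g f} else {f ∈ V | ok q g f})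
        (if c g then m else m + 1)) :
      GuessForce ok V (m + 1)

/-- `opt_weak,p,r(F)`: the relative position model. In each round the adversary chooses a set
of `r` distinct inputs (given by `q.2`) and one further input `q.1` not among them, and the
learner guesses the relative position (in `{1,…,r+1}`) of the value of the target at `q.1`
among the values at all `r+1` chosen inputs; weak reinforcement. -/
noncomputable def optRPos (n r : ℕ) (F : Set (Equiv.Perm (Fin n))) : ℕ :=
  sSup {m | GuessForce
    (fun (q : {q : Fin n × (Fin r → Fin n) // Function.Injective q.2 ∧ ∀ i, q.2 i ≠ q.1})
         (g : ℕ) f =>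
      g = (Finset.univ.filter (fun i => f (q.1.2 i) < f q.1.1)).card + 1) F m}

namespace GuessForce

variable {α Q A : Type*} {ok : Q → A → α → Prop}

theorem nonempty {V : Set α} {m : ℕ} [Nonempty A] (h : GuessForce ok V m) : V.Nonempty := by
  cases h with
  | zero _ hV => exact hV
  | step _ m q c hne _ =>
    obtain ⟨f, hf⟩ := hne (Classical.arbitrary A)
    split_ifs at hf
    exacts [⟨f, hf.1⟩, ⟨f, hf.1⟩]

theorem mono {V W : Set α} {m : ℕ} (h : GuessForce ok V m) (hVW : V ⊆ W) :
    GuessForce ok W m := by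
  induction h generalizing W with
  | zero V hV => exact .zero W (hV.mono hVW)
  | step V m q c hne _ ih =>
    have hsub : ∀ g : A, (if c g then {f ∈ V | ¬ ok q g f} else {f ∈ V | ok q g f}) ⊆
        (if c g then {f ∈ W | ¬ ok q g f} else {f ∈ W | ok q g f}) := by
      intro g
      split_ifs
      · exact fun f hf => ⟨hVW hf.1, hf.2⟩
      · exact fun f hf => ⟨hVW hf.1, hf.2⟩
    exact .step W m q c (fun g => (hne g).mono (hsub g)) fun g => ih g (hsub g)

/-- The adversary gains a mistake by answering "no" to every guess for the query `q`. -/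
theorem succ_of_forall_no [Nonempty A] {V : Set α} {m : ℕ} (q : Q)
    (h : ∀ g, GuessForce ok {f ∈ V | ¬ ok q g f} m) : GuessForce ok V (m + 1) :=
  .step V m q (fun _ => true) (fun g => by simpa using (h g).nonempty) fun g => by simpa using h g

/-- If every query has a correct guess among `r + 1` fixed ones, guessing by majority shrinks the
version space by the factor `r / (r + 1)` with every mistake. -/
theorem pow_le_mul_ncard [Finite α] {r : ℕ} (G : Finset A) (hG : G.card = r + 1)
    (hok : ∀ q f, ∃ g ∈ G, ok q g f) {V : Set α} {m : ℕ} (h : GuessForce ok V m) :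
    (r + 1) ^ m ≤ r ^ m * V.ncard := by
  induction h with
  | zero V hV => simpa [Nat.one_le_iff_ne_zero, ← Nat.pos_iff_ne_zero] using (Set.ncard_pos V.toFinite).2 hV
  | step V m q c _ _ ih =>
    obtain ⟨g, -, hg⟩ : ∃ g ∈ G, V.ncard ≤ (r + 1) * {f ∈ V | ok q g f}.ncard := by
      by_contra! hlt
      have hne : G.Nonempty := Finset.card_pos.1 (by omega)
      have hsum := Finset.sum_lt_sum_of_nonempty hne hlt
      rw [← Finset.mul_sum, Finset.sum_const, hG, smul_eq_mul] at hsum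
      have hcover : V ⊆ ⋃ g ∈ G, {f ∈ V | ok q g f} := by
        intro f hf
        obtain ⟨g, hg, hgf⟩ := hok q f
        exact Set.mem_biUnion hg ⟨hf, hgf⟩
      have hle := (Set.ncard_le_ncard hcover).trans (Finset.set_ncard_biUnion_le G _)
      exact absurd (lt_of_mul_lt_mul_left hsum (Nat.zero_le _)) (not_lt.2 hle)
    have hsplit : V.ncard = {f ∈ V | ok q g f}.ncard + {f ∈ V | ¬ ok q g f}.ncard := by
      rw [← Set.ncard_union_eq (Set.disjoint_left.2 fun f h₁ h₂ => h₂.2 h₁.2)]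
      congr 1
      ext f
      simp only [Set.mem_union, Set.mem_ofPred_eq]
      tauto
    have ih := ih g
    split_ifs at ih
    · have hno : (r + 1) * {f ∈ V | ¬ ok q g f}.ncard ≤ r * V.ncard := by nlinarith
      calc (r + 1) ^ (m + 1) = (r + 1) ^ m * (r + 1) := pow_succ _ _
        _ ≤ r ^ m * {f ∈ V | ¬ ok q g f}.ncard * (r + 1) := by gcongr
        _ = r ^ m * ((r + 1) * {f ∈ V | ¬ ok q g f}.ncard) := by ring
        _ ≤ r ^ m * (r * V.ncard) := by gcongr
        _ = r ^ (m + 1) * V.ncard := by ring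
    · exact ih.trans (Nat.mul_le_mul_left _ (by omega))

end GuessForce

/-- `PosOk q g f`: the guess `g` is the relative position of `f q.1` among the values of `f` at
all the inputs of the query `q`. -/
abbrev PosOk {n r : ℕ}
    (q : {q : Fin n × (Fin r → Fin n) // Function.Injective q.2 ∧ ∀ i, q.2 i ≠ q.1})
    (g : ℕ) (f : Equiv.Perm (Fin n)) : Prop :=
  g = (Finset.univ.filter (fun i => f (q.1.2 i) < f q.1.1)).card + 1

theorem GuessForce.le_mul_log {n r m : ℕ} (hr : 0 < r) {V : Set (Equiv.Perm (Fin n))}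
    (h : GuessForce (PosOk (n := n) (r := r)) V m) : (m : ℝ) ≤ (r + 1) * (n * Real.log n) := by
  have hpow := h.pow_le_mul_ncard (r := r) (Finset.Icc 1 (r + 1)) (by simp) fun q f =>
    ⟨_, Finset.mem_Icc.2 ⟨Nat.le_add_left _ _, Nat.succ_le_succ
      ((Finset.card_le_univ _).trans_eq (Fintype.card_fin r))⟩, rfl⟩
  have hcard : V.ncard ≤ n ^ n := by
    refine (Set.ncard_le_card V).trans ?_
    rw [Nat.card_eq_fintype_card, Fintype.card_perm, Fintype.card_fin]
    exact n.factorial_le_pow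
  have hr' : (0 : ℝ) < r := by exact_mod_cast hr
  have hn : (0 : ℝ) < (n : ℝ) ^ n := by
    rcases Nat.eq_zero_or_pos n with rfl | hn
    · simp
    · positivity
  have hreal : ((r : ℝ) + 1) ^ m ≤ r ^ m * (n : ℝ) ^ n := by
    exact_mod_cast hpow.trans (Nat.mul_le_mul_left _ hcard)
  have hlog := Real.log_le_log (by positivity) hreal
  rw [Real.log_mul (by positivity) hn.ne', Real.log_pow, Real.log_pow, Real.log_pow] at hlog
  have hstep : 1 / ((r : ℝ) + 1) ≤ Real.log (r + 1) - Real.log r := by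
    rw [← Real.log_div (by positivity) hr'.ne']
    refine le_trans (le_of_eq ?_) (Real.one_sub_inv_le_log_of_pos (by positivity))
    field_simp
    ring
  have hmul := mul_le_mul_of_nonneg_left hstep (Nat.cast_nonneg (α := ℝ) m)
  have hdiv : (m : ℝ) / (r + 1) ≤ n * Real.log n := by
    rw [div_eq_mul_one_div]
    linarith
  rw [div_le_iff₀ (by positivity)] at hdiv
  linarith

/-- Any set of at least `r + 1` gaps between the pivots `0, …, K - 1` can be cut by `r` pivots into
`r + 1` classes of almost equal size. -/
theorem exists_balanced_pivots {K r : ℕ} (P : Finset ℕ) (hP : ∀ p ∈ P, p ≤ K)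
    (hcard : r + 1 ≤ P.card) :
    ∃ s : Fin r → ℕ, Function.Injective s ∧ (∀ i, s i < K) ∧
      ∀ a, (r + 1) * (P.filter fun p => (Finset.univ.filter fun i => s i < p).card = a).card
        ≤ P.card + r * (r + 1) := by
  obtain ⟨m, b, hm, hb, hN⟩ : ∃ m b, 0 < m ∧ b ≤ r ∧ P.card = (r + 1) * m + b :=
    ⟨P.card / (r + 1), P.card % (r + 1), Nat.div_pos hcard (Nat.succ_pos _),
      Nat.lt_succ_iff.1 (Nat.mod_lt _ (Nat.succ_pos _)), (Nat.div_add_mod _ _).symm⟩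
  have hidx (i : Fin r) : (i + 1) * m < P.card := by
    have : (i + 1) * m ≤ r * m := Nat.mul_le_mul_right _ i.2
    nlinarith
  let e := P.orderEmbOfFin rfl
  have he0 (i : Fin r) : 0 < e ⟨(i + 1) * m, hidx i⟩ :=
    lt_of_le_of_lt (Nat.zero_le (e ⟨0, by omega⟩)) (e.lt_iff_lt.2 (by
      simp only [Fin.mk_lt_mk]; positivity))
  have hlt (i : Fin r) (j : Fin P.card) :
      e ⟨(i + 1) * m, hidx i⟩ - 1 < e j ↔ (i : ℕ) < j / m := by
    rw [show (e ⟨(i + 1) * m, hidx i⟩ - 1 < e j ↔ e ⟨(i + 1) * m, hidx i⟩ ≤ e j) by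
      have := he0 i; omega, e.le_iff_le, Fin.le_def, ← Nat.succ_le_iff, Nat.le_div_iff_mul_le hm]
  refine ⟨fun i => e ⟨(i + 1) * m, hidx i⟩ - 1, fun i i' h => ?_, fun i => ?_, fun a => ?_⟩
  · have h1 := he0 i
    have h2 := he0 i'
    have h' : e ⟨(i + 1) * m, hidx i⟩ = e ⟨(i' + 1) * m, hidx i'⟩ := by
      simp only at h
      omega
    have := Fin.mk.inj_iff.1 (e.injective h')
    have := Nat.eq_of_mul_eq_mul_right hm this
    exact Fin.ext (by omega)
  · have := hP _ (P.orderEmbOfFin_mem rfl ⟨(i + 1) * m, hidx i⟩)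
    have := he0 i
    simp only [e] at *
    omega
  · have hsub : (P.filter fun p => (Finset.univ.filter fun i : Fin r =>
        e ⟨(i + 1) * m, hidx i⟩ - 1 < p).card = a) ⊆
        (Finset.univ.filter fun j : Fin P.card =>
          (j : ℕ) ∈ Finset.Ico (a * m) (a * m + (m + b))).image e := by
      intro p hp
      obtain ⟨hpP, hpa⟩ := Finset.mem_filter.1 hp
      obtain ⟨j, rfl⟩ : ∃ j, e j = p := by
        have : p ∈ Set.range e := by rw [Finset.range_orderEmbOfFin]; exact hpP
        exact this
      refine Finset.mem_image_of_mem _ (Finset.mem_filter.2 ⟨Finset.mem_univ _, ?_⟩)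
      simp only [hlt] at hpa
      rw [Fin.card_filter_val_lt] at hpa
      have hle := Nat.div_mul_le_self j m
      have hlt := Nat.lt_div_mul_add (a := j) hm
      rw [Finset.mem_Ico]
      have hj := j.2.trans_eq hN
      generalize (j : ℕ) / m = c at hpa hle hlt
      rcases le_total r c with h | h
      · rw [min_eq_left h] at hpa
        subst hpa
        have := Nat.mul_le_mul_right m h
        constructor <;> nlinarith
      · rw [min_eq_right h] at hpa
        subst hpa
        constructor <;> nlinarith
    have hle := (Finset.card_le_card hsub).trans Finset.card_image_le
    have hle2 : (Finset.univ.filter fun j : Fin P.card =>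
          (j : ℕ) ∈ Finset.Ico (a * m) (a * m + (m + b))).card ≤ m + b := by
      rw [← Finset.card_map Fin.valEmbedding]
      refine (Finset.card_le_card (t := Finset.Ico (a * m) (a * m + (m + b))) ?_).trans (by simp)
      intro x hx
      obtain ⟨j, hj, rfl⟩ := Finset.mem_map.1 hx
      exact (Finset.mem_filter.1 hj).2
    have := Nat.mul_le_mul_left (r + 1) (hle.trans hle2)
    nlinarith

theorem exists_perm_lt_iff {n : ℕ} {h : Fin n → ℕ} (hh : Function.Injective h) :
    ∃ f : Equiv.Perm (Fin n), ∀ i j, f i < f j ↔ h i < h j := by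
  refine ⟨(Tuple.sort h)⁻¹, fun i j => ?_⟩
  have hmono : StrictMono (h ∘ Tuple.sort h) :=
    (Tuple.monotone_sort h).strictMono_of_injective (hh.comp (Tuple.sort h).injective)
  rw [← hmono.lt_iff_lt]
  simp

/-- The inputs below `K` are pivots with increasing values; every other input can be placed
independently into any of the gaps between them. -/
theorem exists_perm_of_gaps {n : ℕ} (K : ℕ) (γ : Fin n → ℕ) :
    ∃ f : Equiv.Perm (Fin n), ∀ i x : Fin n, (i : ℕ) < K → K ≤ x → (f i < f x ↔ (i : ℕ) < γ x) := by
  obtain ⟨f, hf⟩ := exists_perm_lt_iff (n := n)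
    (h := fun i => n * (if (i : ℕ) < K then 2 * (i : ℕ) + 1 else 2 * γ i) + i) (by
      intro i j hij
      have hmod := congrArg (· % n) hij
      simp only [Nat.mul_add_mod, Nat.mod_eq_of_lt i.2, Nat.mod_eq_of_lt j.2] at hmod
      exact Fin.ext hmod)
  refine ⟨f, fun i x hi hx => ?_⟩
  rw [hf, if_pos hi, if_neg (not_lt.2 hx)]
  have hin := i.2
  have hxn := x.2
  constructor
  · intro h
    by_contra! hle
    have := Nat.mul_le_mul_left n hle
    nlinarith
  · intro h
    have := Nat.mul_le_mul_left n (Nat.succ_le_iff.2 h)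
    nlinarith

theorem guessForce_of_gaps {n r K : ℕ} (hr : 0 < r) (Φ : (Fin n → ℕ) → Equiv.Perm (Fin n))
    (hΦ : ∀ γ, ∀ i x : Fin n, (i : ℕ) < K → K ≤ x → (Φ γ i < Φ γ x ↔ (i : ℕ) < γ x))
    (m : ℕ) (t : Fin n → ℕ) (P : Fin n → Finset ℕ) (hP : ∀ x, ∀ p ∈ P x, p ≤ K)
    (ht : ∀ x, ((r : ℝ) + 1) ^ 2 * ((r + 1) / r) ^ t x ≤ (P x).card + r * (r + 1))
    (hm : m ≤ ∑ x ∈ Finset.univ.filter (fun x : Fin n => K ≤ x), t x) :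
    GuessForce (PosOk (n := n) (r := r)) (Φ '' {γ | ∀ x, γ x ∈ P x}) m := by
  have hr' : (0 : ℝ) < r := by exact_mod_cast hr
  have hone : 1 ≤ ((r : ℝ) + 1) / r := by rw [le_div_iff₀ hr']; linarith
  have hcard (x : Fin n) : r + 1 ≤ (P x).card := by
    have h1 := ht x
    have h2 : ((r : ℝ) + 1) ^ 2 * 1 ≤ ((r : ℝ) + 1) ^ 2 * ((r + 1) / r) ^ t x := by
      gcongr
      exact one_le_pow₀ hone
    have : ((r + 1 : ℕ) : ℝ) ≤ (P x).card := by push_cast; nlinarith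
    exact_mod_cast this
  induction m generalizing t P with
  | zero =>
    choose γ hγ using fun x => Finset.card_pos.1 ((Nat.succ_pos r).trans_le (hcard x))
    exact .zero _ ⟨Φ γ, γ, hγ, rfl⟩
  | succ m ih =>
    obtain ⟨x, hx, hx0⟩ : ∃ x ∈ Finset.univ.filter (fun x : Fin n => K ≤ x), t x ≠ 0 :=
      Finset.exists_ne_zero_of_sum_ne_zero (by omega)
    have hKx : K ≤ x := (Finset.mem_filter.1 hx).2
    obtain ⟨s, hs, hsK, hbal⟩ := exists_balanced_pivots (P x) (hP x) (hcard x)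
    have hsn (i : Fin r) : s i < n := (hsK i).trans (hKx.trans_lt x.2)
    refine GuessForce.succ_of_forall_no ⟨(x, fun i => ⟨s i, hsn i⟩),
      fun i j hij => hs (Fin.mk.inj_iff.1 hij),
      fun i hi => absurd (congrArg Fin.val hi) ((hsK i).trans_le hKx).ne⟩ fun g => ?_
    set C := (P x).filter fun p => (Finset.univ.filter fun i => s i < p).card = g - 1 with hC
    have hCle := hbal (g - 1)
    rw [← hC] at hCle
    have hCsub : C ⊆ P x := Finset.filter_subset _ _
    have hsdiff := Finset.card_sdiff_add_card_eq_card hCsub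
    have ht' (y : Fin n) : ((r : ℝ) + 1) ^ 2 * ((r + 1) / r) ^ (Function.update t x (t x - 1)) y ≤
        (Function.update P x (P x \ C) y).card + r * (r + 1) := by
      rcases eq_or_ne y x with rfl | hy
      · rw [Function.update_self, Function.update_self]
        obtain ⟨k, hk⟩ := Nat.exists_eq_succ_of_ne_zero hx0
        have h1 := ht y
        rw [hk, Nat.succ_eq_add_one, pow_succ (_ / _)] at h1
        rw [hk, Nat.succ_sub_one]
        have h2 : ((r : ℝ) + 1) * C.card ≤ (P y).card + r * (r + 1) := by exact_mod_cast hCle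
        have h3 : ((P y \ C).card : ℝ) + C.card = (P y).card := by exact_mod_cast hsdiff
        rw [← mul_assoc, ← mul_div_assoc, div_le_iff₀ hr'] at h1
        generalize ((r : ℝ) + 1) ^ 2 * ((r + 1) / r) ^ k = X at h1 ⊢
        nlinarith
      · rw [Function.update_of_ne hy, Function.update_of_ne hy]
        exact ht y
    refine (ih (Function.update t x (t x - 1)) (Function.update P x (P x \ C)) ?_ ht' ?_ ?_).mono ?_
    · intro y p hp
      rcases eq_or_ne y x with rfl | hy
      · rw [Function.update_self] at hp
        exact hP _ p (Finset.mem_sdiff.1 hp).1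
      · rw [Function.update_of_ne hy] at hp
        exact hP y p hp
    · rw [← Finset.add_sum_erase _ _ hx] at hm ⊢
      have hrest : ∑ y ∈ (Finset.univ.filter fun x : Fin n => K ≤ x).erase x,
          Function.update t x (t x - 1) y =
          ∑ y ∈ (Finset.univ.filter fun x : Fin n => K ≤ x).erase x, t y :=
        Finset.sum_congr rfl fun y hy => Function.update_of_ne (Finset.ne_of_mem_erase hy) _ _
      rw [Function.update_self, hrest]
      omega
    · intro y
      have h1 := ht' y
      have h2 : ((r : ℝ) + 1) ^ 2 * 1 ≤
          ((r : ℝ) + 1) ^ 2 * ((r + 1) / r) ^ (Function.update t x (t x - 1)) y := by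
        gcongr
        exact one_le_pow₀ hone
      have : ((r + 1 : ℕ) : ℝ) ≤ (Function.update P x (P x \ C) y).card := by push_cast; nlinarith
      exact_mod_cast this
    · rintro _ ⟨γ, hγ, rfl⟩
      have hγx := hγ x
      rw [Function.update_self, Finset.mem_sdiff] at hγx
      refine ⟨⟨γ, fun y => ?_, rfl⟩, fun hg => hγx.2 ?_⟩
      · rcases eq_or_ne y x with rfl | hy
        · exact hγx.1
        · simpa only [Function.update_of_ne hy] using hγ y
      · refine Finset.mem_filter.2 ⟨hγx.1, ?_⟩
        have hlt (i : Fin r) : Φ γ ⟨s i, hsn i⟩ < Φ γ x ↔ s i < γ x := hΦ γ _ x (hsK i) hKx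
        simp only [PosOk, hlt] at hg
        omega

/-- Inserting each of `n - K` inputs among `K` pivots costs the learner `t` mistakes. -/
theorem guessForce_univ {n r K t : ℕ} (hr : 0 < r)
    (ht : ((r : ℝ) + 1) ^ 2 * ((r + 1) / r) ^ t ≤ K) :
    GuessForce (PosOk (n := n) (r := r)) Set.univ ((n - K) * t) := by
  choose Φ hΦ using exists_perm_of_gaps (n := n) K
  refine (guessForce_of_gaps hr Φ hΦ _ (fun _ => t) (fun _ => Finset.range (K + 1))
    (fun _ p hp => Nat.lt_succ_iff.1 (Finset.mem_range.1 hp)) (fun _ => ?_) ?_).mono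
    (Set.subset_univ _)
  · rw [Finset.card_range]
    push_cast
    nlinarith [(Nat.cast_nonneg r : (0 : ℝ) ≤ r)]
  · rw [Finset.sum_const, smul_eq_mul]
    refine Nat.mul_le_mul_right _ ?_
    have hsplit := Finset.card_filter_add_card_filter_not (s := (Finset.univ : Finset (Fin n)))
      (fun x : Fin n => (x : ℕ) < K)
    simp only [not_lt, Finset.card_univ, Fintype.card_fin] at hsplit
    rw [Fin.card_filter_val_lt] at hsplit
    omega

theorem exists_eventually_guessForce {ε : ℝ} (hε : 0 < ε) (hε1 : ε ≤ 1) {r : ℕ} (hr : 0 < r) :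
    ∃ n₀ : ℕ, ∀ n : ℕ, n₀ ≤ n → ∃ m : ℕ, (1 - ε) * r * n * Real.log n ≤ m ∧
      GuessForce (PosOk (n := n) (r := r)) Set.univ m := by
  have hr' : (0 : ℝ) < r := by exact_mod_cast hr
  obtain ⟨M, hM⟩ := exists_nat_ge (2 / ε)
  have hM2 : 2 ≤ M * ε := (div_le_iff₀ hε).1 hM
  have hM0 : (0 : ℝ) < M := (div_pos two_pos hε).trans_le hM
  set D : ℝ := r * Real.log (2 * M * (r + 1) ^ 2) + 1 with hD
  have hlim : Filter.Tendsto (fun n : ℕ => Real.log n) Filter.atTop Filter.atTop :=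
    Real.tendsto_log_atTop.comp tendsto_natCast_atTop_atTop
  obtain ⟨N, hN⟩ := Filter.eventually_atTop.1 (hlim.eventually_ge_atTop (D / (ε / 2 * r)))
  refine ⟨max N (2 * M * (r + 1) ^ 2), fun n hn => ?_⟩
  have hlogn := hN n (le_of_max_le_left hn)
  have hn2 : 2 * M * ((r : ℝ) + 1) ^ 2 ≤ n := by exact_mod_cast le_of_max_le_right hn
  rw [div_le_iff₀ (by positivity)] at hlogn
  have hn0 : (0 : ℝ) < n := lt_of_lt_of_le (by positivity) hn2
  have hKle : ((n / M : ℕ) : ℝ) ≤ n / M := Nat.cast_div_le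
  have hKge : (n : ℝ) / (2 * M) ≤ (n / M : ℕ) := by
    have h1 : (n : ℝ) / M < (n / M : ℕ) + 1 := by
      rw [div_lt_iff₀ hM0]
      exact_mod_cast Nat.lt_mul_of_div_lt (Nat.lt_succ_self _) (Nat.cast_pos.1 hM0)
    have h2 : (2 : ℝ) ≤ n / M := by
      rw [le_div_iff₀ hM0]
      nlinarith [one_le_pow₀ (n := 2) (le_add_of_nonneg_left hr'.le : (1 : ℝ) ≤ r + 1)]
    have h3 : (n : ℝ) / (2 * M) = n / M / 2 := by field_simp
    linarith
  set K : ℕ := n / M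
  set ρ : ℝ := Real.log ((r + 1) / r)
  set L : ℝ := Real.log (n / (2 * M * (r + 1) ^ 2)) with hL
  have hρ0 : 0 < ρ := Real.log_pos (by rw [lt_div_iff₀ hr']; linarith)
  have hρr : ρ * r ≤ 1 := by
    have := Real.log_le_sub_one_of_pos (x := ((r : ℝ) + 1) / r) (by positivity)
    have h' : ((r : ℝ) + 1) / r - 1 = 1 / r := by field_simp; ring
    rw [h', le_div_iff₀ hr'] at this
    exact this
  have hL0 : 0 ≤ L := Real.log_nonneg (by rw [le_div_iff₀ (by positivity)]; linarith)
  set t : ℕ := ⌊L / ρ⌋₊ 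
  have htle : t * ρ ≤ L := (le_div_iff₀ hρ0).1 (Nat.floor_le (div_nonneg hL0 hρ0.le))
  have htge : (1 - ε / 2) * (r * Real.log n) ≤ t := by
    have h1 : L / ρ < t + 1 := Nat.lt_floor_add_one _
    have h2 : r * L ≤ L / ρ := by
      rw [le_div_iff₀ hρ0]
      nlinarith
    have h3 := h2.trans_lt h1
    rw [hL, Real.log_div hn0.ne' (by positivity)] at h3
    nlinarith
  refine ⟨(n - K) * t, ?_, guessForce_univ hr ?_⟩
  · have hKn : (1 - ε / 2) * n ≤ ((n - K : ℕ) : ℝ) := by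
      rw [Nat.cast_sub (Nat.div_le_self n M)]
      have : (n : ℝ) / M ≤ ε / 2 * n := by
        rw [div_le_iff₀ hM0]
        nlinarith
      linarith
    have hlog0 : 0 ≤ Real.log n := Real.log_natCast_nonneg n
    push_cast
    calc (1 - ε) * r * n * Real.log n
        ≤ (1 - ε / 2) * n * ((1 - ε / 2) * (r * Real.log n)) := by
          have : 0 ≤ r * n * Real.log n := by positivity
          nlinarith [sq_nonneg ε]
      _ ≤ ((n - K : ℕ) : ℝ) * t := by
          have : 0 ≤ 1 - ε / 2 := by linarith
          gcongr
  · have hexp : ((r + 1) / r : ℝ) ^ t ≤ n / (2 * M * (r + 1) ^ 2) := by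
      rw [← Real.log_le_log_iff (by positivity) (by positivity), Real.log_pow]
      exact htle
    calc ((r : ℝ) + 1) ^ 2 * ((r + 1) / r) ^ t
        ≤ ((r : ℝ) + 1) ^ 2 * (n / (2 * M * (r + 1) ^ 2) : ℝ) := by gcongr
      _ = (n : ℝ) / (2 * M) := by field_simp
      _ ≤ K := hKge

/-- For every `ε > 0` there exists `r₀` such that for every integer
`r ≥ r₀` there exists `n₀` such that for all `n ≥ n₀`,
`(1−ε)·r·n·ln n ≤ opt_weak,p,r(S_n) ≤ (1+ε)·r·n·ln n`; i.e.
`lim_{r→∞} lim_{n→∞} opt_weak,p,r(S_n)/(r·n·ln n) = 1`. -/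
theorem stmt19 (ε : ℝ) (hε : 0 < ε) :
    ∃ r₀ : ℕ, ∀ r : ℕ, r₀ ≤ r → ∃ n₀ : ℕ, ∀ n : ℕ, n₀ ≤ n →
      (1 - ε) * r * n * Real.log n
          ≤ (optRPos n r (Set.univ : Set (Equiv.Perm (Fin n))) : ℝ) ∧
      (optRPos n r (Set.univ : Set (Equiv.Perm (Fin n))) : ℝ)
          ≤ (1 + ε) * r * n * Real.log n := by
  refine ⟨max 1 ⌈1 / ε⌉₊, fun r hr => ?_⟩
  have hr0 : 0 < r := le_of_max_le_left hr
  have hrε : 1 ≤ ε * r := by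
    have := (Nat.le_ceil _).trans (Nat.cast_le (α := ℝ).2 (le_of_max_le_right hr))
    rwa [div_le_iff₀' hε] at this
  obtain ⟨n₀, hn₀⟩ := exists_eventually_guessForce (lt_min hε one_pos) (min_le_right ε 1) hr0
  refine ⟨n₀, fun n hn => ?_⟩
  obtain ⟨m, hm, hforce⟩ := hn₀ n hn
  have hlog : 0 ≤ n * Real.log n := mul_nonneg n.cast_nonneg (Real.log_natCast_nonneg n)
  have hbdd : BddAbove {m | GuessForce (PosOk (n := n) (r := r)) Set.univ m} :=
    ⟨⌊(r + 1) * (n * Real.log n)⌋₊, fun m hm => Nat.le_floor (hm.le_mul_log hr0)⟩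
  constructor
  · have hle : (m : ℝ) ≤ optRPos n r Set.univ := Nat.cast_le.2 (le_csSup hbdd hforce)
    refine le_trans ?_ (hm.trans hle)
    have := mul_le_mul_of_nonneg_right (min_le_left ε 1) (mul_nonneg r.cast_nonneg hlog)
    linarith
  · have hmem := (Nat.sSup_mem ⟨m, hforce⟩ hbdd).le_mul_log hr0
    refine hmem.trans ?_
    nlinarith
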